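/- Let c > 0 and χ be real numbers with χ > c² + 6, and let k₀ be the largest integer k ≥ 1 with 2k·(2k+1) < χ − c². Then: (i) A^{new}_k = ((4k−4)/(4k+4))·((4k−6)/(4k+2))·((4k+7)/(4k−1)) for every k ≥ 1; (ii) 0 = A^{new}₁ < A^{new}₂ < A^{new}₃ < ⋯, and A^{new}_k < 1 for every k ≥ 1; (iii) √2 = β^{new}₁ < β^{new}₂ < ⋯ < β^{new}_{k₀} < β^{new}_{k₀+1} < β^{new}_{k₀+2}; (iv) β^{new}_k ≤ β_k for every k with 1 ≤ k ≤ k₀ + 2. -/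

import Mathlib

open Real

/-- `A_k`. -/
noncomputable def ASeq (k : ℕ) : ℝ :=
  (k : ℝ) * (2 * (k : ℝ) - 1) * (4 * (k : ℝ) + 3) /
      (((k : ℝ) + 1) * (2 * (k : ℝ) + 1) * (4 * (k : ℝ) - 1)) *
    Real.sqrt ((4 * (k : ℝ) + 5) / (4 * (k : ℝ) - 3))

/-- `B_k`. -/
noncomputable def BSeq (c χ : ℝ) (k : ℕ) : ℝ :=
  (χ - 2 * (k : ℝ) * (2 * (k : ℝ) + 1)) / c ^ 2 *
      ((4 * (k : ℝ) + 3) * Real.sqrt ((4 * (k : ℝ) + 1) * (4 * (k : ℝ) + 5))) /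
      ((2 * (k : ℝ) + 1) * (2 * (k : ℝ) + 2)) -
    (4 * (k : ℝ) * (2 * (k : ℝ) + 1) - 1) * Real.sqrt ((4 * (k : ℝ) + 1) * (4 * (k : ℝ) + 5)) /
      ((4 * (k : ℝ) - 1) * (2 * (k : ℝ) + 1) * (2 * (k : ℝ) + 2))

/-- The sequence `α_k`. -/
noncomputable def alphaSeq (c χ : ℝ) : ℕ → ℝ
  | 0 => 0
  | 1 => 1
  | 2 => BSeq c χ 0
  | (k + 3) => BSeq c χ (k + 1) * alphaSeq c χ (k + 2) - ASeq (k + 1) * alphaSeq c χ (k + 1)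

/-- The sequence `β_k = α_k·√(2/(4k−3))`. -/
noncomputable def betaSeq (c χ : ℝ) (k : ℕ) : ℝ :=
  alphaSeq c χ k * Real.sqrt (2 / (4 * (k : ℝ) - 3))

/-- `Ã_k`. -/
noncomputable def AtildeSeq (k : ℕ) : ℝ :=
  (k : ℝ) * (2 * (k : ℝ) - 1) * (4 * (k : ℝ) + 3) /
    (((k : ℝ) + 1) * (2 * (k : ℝ) + 1) * (4 * (k : ℝ) - 1))

/-- `ρ_k`. -/
noncomputable def rhoSeq (k : ℕ) : ℝ :=
  (4 * (k : ℝ) - 6) * (4 * (k : ℝ) - 4) * (4 * (k : ℝ) + 7) /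
    ((4 * (k : ℝ) - 2) * (4 * (k : ℝ)) * (4 * (k : ℝ) + 3))

/-- `A^{new}_k = Ã_k·ρ_k`. -/
noncomputable def AnewSeq (k : ℕ) : ℝ := AtildeSeq k * rhoSeq k

/-- `B^χ_k`. -/
noncomputable def BchiSeq (c χ : ℝ) (k : ℕ) : ℝ :=
  (4 * (k : ℝ) + 1) * (4 * (k : ℝ) + 3) / ((2 * (k : ℝ) + 1) * (2 * (k : ℝ) + 2)) *
    ((χ - c ^ 2 - 2 * (k : ℝ) * (2 * (k : ℝ) + 1)) / c ^ 2)

/-- The sequence `β^{new}_k`. -/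
noncomputable def betaNewSeq (c χ : ℝ) : ℕ → ℝ
  | 0 => 0
  | 1 => betaSeq c χ 1
  | 2 => betaSeq c χ 2
  | 3 => betaSeq c χ 3
  | (k + 4) =>
      (BchiSeq c χ (k + 2) + 1) * betaNewSeq c χ (k + 3) +
        AnewSeq (k + 2) * (betaNewSeq c χ (k + 3) - betaNewSeq c χ (k + 2))

lemma anew_formula (k : ℕ) (hk : 1 ≤ k) : AnewSeq k =
          (4 * (k : ℝ) - 4) / (4 * (k : ℝ) + 4) * ((4 * (k : ℝ) - 6) / (4 * (k : ℝ) + 2)) *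
            ((4 * (k : ℝ) + 7) / (4 * (k : ℝ) - 1)) := by
  have hk' : (1 : ℝ) ≤ k := by exact_mod_cast hk
  unfold AnewSeq AtildeSeq rhoSeq
  have h1 : (4 * (k : ℝ) - 1) ≠ 0 := by linarith
  have h2 : (2 * (k : ℝ) - 1) ≠ 0 := by linarith
  have h3 : (k : ℝ) ≠ 0 := by linarith
  have h4 : (4 * (k : ℝ) + 3) ≠ 0 := by linarith
  have h5 : ((k : ℝ) + 1) ≠ 0 := by linarith
  have h6 : (2 * (k : ℝ) + 1) ≠ 0 := by linarith
  have h7 : (4 * (k : ℝ) - 2) ≠ 0 := by linarith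
  have h8 : (4 * (k : ℝ) + 4) ≠ 0 := by linarith
  have h9 : (4 * (k : ℝ) + 2) ≠ 0 := by linarith
  rw [div_mul_div_comm, div_mul_div_comm, div_mul_div_comm,
    div_eq_div_iff (by simp [*]) (by simp [*])]
  ring

lemma anew_succ (m : ℕ) : AnewSeq (m + 1) =
    (4 * (m : ℝ)) * (4 * m - 2) * (4 * m + 11) / ((4 * m + 8) * (4 * m + 6) * (4 * m + 3)) := by
  rw [anew_formula _ (by omega)]
  push_cast
  have h1 : (4 * (m : ℝ) + 8) ≠ 0 := by positivity
  have h2 : (4 * (m : ℝ) + 6) ≠ 0 := by positivity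
  have h3 : (4 * (m : ℝ) + 3) ≠ 0 := by positivity
  rw [show 4 * ((m : ℝ) + 1) + 4 = 4 * m + 8 by ring, show 4 * ((m : ℝ) + 1) + 2 = 4 * m + 6 by ring,
    show 4 * ((m : ℝ) + 1) - 1 = 4 * m + 3 by ring]
  field_simp
  ring

lemma anew_lt (m : ℕ) : AnewSeq (m + 1) < AnewSeq (m + 2) := by
  rw [anew_succ, anew_succ, div_lt_div_iff₀ (by positivity) (by positivity)]
  have hm : (0 : ℝ) ≤ m := by positivity
  push_cast
  rw [← sub_pos]
  ring_nf
  positivity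

lemma anew_lt_one (m : ℕ) : AnewSeq (m + 1) < 1 := by
  rw [anew_succ, div_lt_one (by positivity)]
  have hm : (0 : ℝ) ≤ m := by positivity
  rw [← sub_pos]
  ring_nf
  positivity

lemma anew_pos (m : ℕ) : 0 < AnewSeq (m + 2) := by
  rw [anew_succ]
  push_cast
  have hm : (0 : ℝ) ≤ m := by positivity
  have : 0 < 4 * ((m : ℝ) + 1) - 2 := by linarith
  positivity

lemma anew_le_tilde (m : ℕ) : AnewSeq (m + 2) ≤ AtildeSeq (m + 2) := by
  unfold AnewSeq
  have hm : (0 : ℝ) ≤ m := by positivity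
  have h1 : 0 ≤ AtildeSeq (m + 2) := by
    unfold AtildeSeq
    push_cast
    have : 0 < 2 * ((m : ℝ) + 2) - 1 := by linarith
    have : 0 < 4 * ((m : ℝ) + 2) - 1 := by linarith
    positivity
  have h2 : rhoSeq (m + 2) ≤ 1 := by
    unfold rhoSeq
    push_cast
    have : 0 < 4 * ((m : ℝ) + 2) - 2 := by linarith
    rw [div_le_one (by positivity), ← sub_nonneg]
    ring_nf
    positivity
  exact mul_le_of_le_one_right h1 h2

lemma tilde_nonneg (m : ℕ) : 0 ≤ AtildeSeq (m + 1) := by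
  have hm : (0 : ℝ) ≤ m := by positivity
  unfold AtildeSeq
  push_cast
  have : 0 < 2 * ((m : ℝ) + 1) - 1 := by linarith
  have : 0 < 4 * ((m : ℝ) + 1) - 1 := by linarith
  positivity

lemma beta_one (c χ : ℝ) : betaSeq c χ 1 = √2 := by
  simp only [betaSeq, alphaSeq]
  norm_num

lemma beta_two (c χ : ℝ) (hc : 0 < c) :
    betaSeq c χ 2 = (BchiSeq c χ 0 + 1) * betaSeq c χ 1 := by
  rw [beta_one]
  simp only [betaSeq, alphaSeq, BSeq, BchiSeq]
  have h : √5 * √(2 / 5) = √2 := by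
    rw [← Real.sqrt_mul (by norm_num)]; norm_num
  norm_num
  have h5 : √5 ≠ 0 := by positivity
  have hc' : c ≠ 0 := hc.ne'
  field_simp
  ring

lemma beta_rec (c χ : ℝ) (hc : 0 < c) (m : ℕ) :
    betaSeq c χ (m + 3) = (BchiSeq c χ (m + 1) + 1) * betaSeq c χ (m + 2) +
      AtildeSeq (m + 1) * (betaSeq c χ (m + 2) - betaSeq c χ (m + 1)) := by
  have hm : (0 : ℝ) ≤ m := by positivity
  have hc' : c ≠ 0 := hc.ne'
  simp only [betaSeq, alphaSeq, BSeq, ASeq, BchiSeq, AtildeSeq]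
  push_cast
  generalize alphaSeq c χ (m + 2) = x
  generalize alphaSeq c χ (m + 1) = y
  rw [show 4 * ((m : ℝ) + 1) + 5 = 4 * m + 9 by ring, show 4 * ((m : ℝ) + 1) + 1 = 4 * m + 5 by ring,
    show 4 * ((m : ℝ) + 1) - 3 = 4 * m + 1 by ring, show 4 * ((m : ℝ) + 3) - 3 = 4 * m + 9 by ring,
    show 4 * ((m : ℝ) + 2) - 3 = 4 * m + 5 by ring, show 4 * ((m : ℝ) + 1) - 1 = 4 * m + 3 by ring,
    show 2 * ((m : ℝ) + 1) + 1 = 2 * m + 3 by ring, show 2 * ((m : ℝ) + 1) + 2 = 2 * (m + 2) by ring,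
    show (m : ℝ) + 1 + 1 = m + 2 by ring]
  have e1 : √((4 * (m : ℝ) + 5) * (4 * m + 9)) * √(2 / (4 * m + 9))
      = (4 * m + 5) * √(2 / (4 * m + 5)) := by
    rw [← Real.sqrt_mul (by positivity), ← Real.sqrt_sq (show 0 ≤ 4 * (m : ℝ) + 5 by positivity),
      ← Real.sqrt_mul (by positivity), Real.sqrt_sq (show 0 ≤ 4 * (m : ℝ) + 5 by positivity)]
    congr 1
    field_simp
  have e2 : √((4 * (m : ℝ) + 9) / (4 * m + 1)) * √(2 / (4 * m + 9)) = √(2 / (4 * m + 1)) := by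
    rw [← Real.sqrt_mul (by positivity)]
    congr 1
    field_simp
  generalize √((4 * (m : ℝ) + 5) * (4 * m + 9)) = p at *
  generalize √(2 / (4 * (m : ℝ) + 9)) = q at *
  generalize √(2 / (4 * (m : ℝ) + 5)) = r at *
  generalize √((4 * (m : ℝ) + 9) / (4 * m + 1)) = s at *
  rw [← e2]
  have key : ∀ U V W : ℝ, ((U * ((4 * ((m:ℝ) + 1) + 3) * p) / ((2 * m + 3) * (2 * (m + 2))) -
      V * p / ((4 * m + 3) * (2 * m + 3) * (2 * (m + 2)))) * x - W * s * y) * q =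
      (U * (4 * (m + 1) + 3) / ((2 * m + 3) * (2 * (m + 2))) -
      V / ((4 * m + 3) * (2 * m + 3) * (2 * (m + 2)))) * x * (p * q) - W * y * (s * q) := by
    intro U V W; ring
  rw [key, e1]
  have h1 : (4 * (m : ℝ) + 3) ≠ 0 := by positivity
  have h2 : (2 * (m : ℝ) + 3) ≠ 0 := by positivity
  have h3 : ((m : ℝ) + 2) ≠ 0 := by positivity
  field_simp
  ring

lemma bchi_pos (c χ : ℝ) (hc : 0 < c) (k k₀ : ℕ) (hk : k ≤ k₀)
    (h : 2 * (k₀ : ℝ) * (2 * (k₀ : ℝ) + 1) < χ - c ^ 2) : 0 < BchiSeq c χ k := by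
  unfold BchiSeq
  have hk' : (k : ℝ) ≤ k₀ := by exact_mod_cast hk
  have h0 : (0 : ℝ) ≤ k := by positivity
  have : 0 < χ - c ^ 2 - 2 * (k : ℝ) * (2 * (k : ℝ) + 1) := by nlinarith
  positivity

lemma betanew_main (c χ : ℝ) (hc : 0 < c) (k₀ : ℕ) (hk : 1 ≤ k₀)
    (h : 2 * (k₀ : ℝ) * (2 * (k₀ : ℝ) + 1) < χ - c ^ 2) (m : ℕ) (hm : m ≤ k₀) :
    0 < betaNewSeq c χ (m + 1) ∧ betaNewSeq c χ (m + 1) < betaNewSeq c χ (m + 2) ∧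
    betaNewSeq c χ (m + 2) ≤ betaSeq c χ (m + 2) ∧
    betaNewSeq c χ (m + 2) - betaNewSeq c χ (m + 1) ≤ betaSeq c χ (m + 2) - betaSeq c χ (m + 1) := by
  induction m with
  | zero =>
    have hb := bchi_pos c χ hc 0 k₀ (by omega) h
    have h2 := beta_two c χ hc
    have h1 := beta_one c χ
    have hs : 0 < √(2 : ℝ) := by positivity
    simp only [betaNewSeq, zero_add]
    refine ⟨by rw [h1]; exact hs, ?_, le_refl _, le_refl _⟩
    rw [h2, h1]; nlinarith
  | succ m ih =>
    obtain ⟨i1, i2, i3, i4⟩ := ih (by omega)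
    have hb := bchi_pos c χ hc (m + 1) k₀ hm h
    have hr := beta_rec c χ hc m
    have ht := tilde_nonneg m
    refine ⟨by linarith, ?_⟩
    have hbp := mul_pos hb (show 0 < betaNewSeq c χ (m + 2) by linarith)
    cases m with
    | zero =>
      simp only [betaNewSeq, zero_add] at *
      refine ⟨?_, le_refl _, le_refl _⟩
      rw [hr]
      have := mul_nonneg ht (sub_nonneg.2 i2.le)
      linarith
    | succ m =>
      have hn : betaNewSeq c χ (m + 4) = (BchiSeq c χ (m + 2) + 1) * betaNewSeq c χ (m + 3) +
        AnewSeq (m + 2) * (betaNewSeq c χ (m + 3) - betaNewSeq c χ (m + 2)) := by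
        simp only [betaNewSeq]
      simp only [add_assoc, Nat.reduceAdd] at *
      have ha := anew_pos m
      have hat := anew_le_tilde m
      have t1 := mul_pos ha (sub_pos.2 i2)
      have t2 := mul_le_mul hat i4 (sub_pos.2 i2).le ht
      have t3 := mul_le_mul_of_nonneg_left i3 hb.le
      refine ⟨?_, ?_, ?_⟩ <;> linarith

theorem stmt17 (c χ : ℝ) (hc : 0 < c) (hχ : χ > c ^ 2 + 6) (k₀ : ℕ)
    (hk₀ : IsGreatest {k : ℕ | 1 ≤ k ∧ 2 * (k : ℝ) * (2 * (k : ℝ) + 1) < χ - c ^ 2} k₀) :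
    (∀ k : ℕ, 1 ≤ k →
        AnewSeq k =
          (4 * (k : ℝ) - 4) / (4 * (k : ℝ) + 4) * ((4 * (k : ℝ) - 6) / (4 * (k : ℝ) + 2)) *
            ((4 * (k : ℝ) + 7) / (4 * (k : ℝ) - 1))) ∧
    (AnewSeq 1 = 0 ∧
      (∀ k : ℕ, 1 ≤ k → AnewSeq k < AnewSeq (k + 1)) ∧
      (∀ k : ℕ, 1 ≤ k → AnewSeq k < 1)) ∧
    (betaNewSeq c χ 1 = Real.sqrt 2 ∧
      ∀ k : ℕ, 1 ≤ k → k ≤ k₀ + 1 → betaNewSeq c χ k < betaNewSeq c χ (k + 1)) ∧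
    (∀ k : ℕ, 1 ≤ k → k ≤ k₀ + 2 → betaNewSeq c χ k ≤ betaSeq c χ k) := by
  obtain ⟨⟨hk, h⟩, -⟩ := hk₀
  refine ⟨anew_formula, ⟨?_, ?_, ?_⟩, ⟨?_, ?_⟩, ?_⟩
  · have := anew_succ 0
    simpa using this
  · intro k hk1
    obtain ⟨m, rfl⟩ : ∃ m, k = m + 1 := ⟨k - 1, by omega⟩
    exact anew_lt m
  · intro k hk1
    obtain ⟨m, rfl⟩ : ∃ m, k = m + 1 := ⟨k - 1, by omega⟩
    exact anew_lt_one m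
  · simp only [betaNewSeq]
    exact beta_one c χ
  · intro k hk1 hk2
    obtain ⟨m, rfl⟩ : ∃ m, k = m + 1 := ⟨k - 1, by omega⟩
    exact (betanew_main c χ hc k₀ hk h m (by omega)).2.1
  · intro k hk1 hk2
    rcases Nat.lt_or_ge k 2 with h2 | h2
    · obtain rfl : k = 1 := by omega
      simp only [betaNewSeq, le_refl]
    · obtain ⟨m, rfl⟩ : ∃ m, k = m + 2 := ⟨k - 2, by omega⟩
      exact (betanew_main c χ hc k₀ hk h m (by omega)).2.2.1
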